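/- arXiv:2003.12004 — 4 statements merged into one kernel-verified Lean document; each statement's English description precedes it below -/
import Mathlib

section
/- For every x ∈ ℝⁿ, the maximum of ‖(A+Δ)x − b‖² over all matrices Δ ∈ ℝ^{m×n} with |Δ| ≤ D equals ‖Ax−b‖² + 2⟨|Ax−b|, D|x|⟩ + ‖D|x|‖², where ⟨·,·⟩ is the Euclidean inner product on ℝ^m. -/
/-- For every `x ∈ ℝⁿ`, the maximum of `‖(A+Δ)x − b‖²` over all matrices
`Δ ∈ ℝ^{m×n}` with `|Δ| ≤ D` (entrywise) equals
`‖Ax−b‖² + 2⟨|Ax−b|, D|x|⟩ + ‖D|x|‖²`. -/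
theorem robust_inner_max_floating
    (m n : ℕ) (hm : 0 < m) (hn : 0 < n)
    (A D : Matrix (Fin m) (Fin n) ℝ) (b : Fin m → ℝ)
    (hD : ∀ i j, 0 ≤ D i j) (x : Fin n → ℝ) :
    IsGreatest
      {r : ℝ | ∃ Δ : Matrix (Fin m) (Fin n) ℝ,
        (∀ i j, |Δ i j| ≤ D i j) ∧
        r = ∑ i, ((A + Δ).mulVec x i - b i) ^ 2}
      ((∑ i, (A.mulVec x i - b i) ^ 2)
        + 2 * (∑ i, |A.mulVec x i - b i| * D.mulVec (fun j => |x j|) i)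
        + ∑ i, (D.mulVec (fun j => |x j|) i) ^ 2) := by
  have key : ((∑ i, (A.mulVec x i - b i) ^ 2)
        + 2 * (∑ i, |A.mulVec x i - b i| * D.mulVec (fun j => |x j|) i)
        + ∑ i, (D.mulVec (fun j => |x j|) i) ^ 2)
      = ∑ i, (|A.mulVec x i - b i| + D.mulVec (fun j => |x j|) i) ^ 2 := by
    rw [Finset.mul_sum, ← Finset.sum_add_distrib, ← Finset.sum_add_distrib]
    refine Finset.sum_congr rfl fun i _ => ?_
    rw [← sq_abs (A.mulVec x i - b i)]
    ring
  rw [key]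
  have hs : ∀ t : ℝ, ∃ s : ℝ, |s| = 1 ∧ s * t = |t| ∧ s * |t| = t ∧ s ^ 2 = 1 := by
    intro t
    rcases le_total 0 t with h | h
    · exact ⟨1, by simp, by simp [abs_of_nonneg h], by simp [abs_of_nonneg h], by simp⟩
    · exact ⟨-1, by simp, by simp [abs_of_nonpos h], by simp [abs_of_nonpos h], by simp⟩
  choose s h1 h2 h3 h4 using hs
  constructor
  · refine ⟨Matrix.of fun i j => s (A.mulVec x i - b i) * D i j * s (x j), fun i j => ?_, ?_⟩
    · rw [Matrix.of_apply, abs_mul, abs_mul, h1, h1, abs_of_nonneg (hD i j)]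
      simp
    · refine Finset.sum_congr rfl fun i _ => ?_
      have e : Matrix.mulVec (Matrix.of fun i j => s (A.mulVec x i - b i) * D i j * s (x j)) x i
          = s (A.mulVec x i - b i) * D.mulVec (fun j => |x j|) i := by
        simp only [Matrix.mulVec, dotProduct, Finset.mul_sum, Matrix.of_apply]
        refine Finset.sum_congr rfl fun j _ => ?_
        rw [← h2 (x j)]
        ring
      rw [Matrix.add_mulVec, Pi.add_apply, e]
      have := h3 (A.mulVec x i - b i)
      have h5 := h4 (A.mulVec x i - b i)
      generalize s (A.mulVec x i - b i) = σ at *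
      generalize D.mulVec (fun j => |x j|) i = d at *
      have e2 : A.mulVec x i + σ * d - b i = σ * (|A.mulVec x i - b i| + d) := by
        rw [mul_add, this]; ring
      rw [e2, mul_pow, h5, one_mul]
  · rintro r ⟨Δ, hΔ, rfl⟩
    refine Finset.sum_le_sum fun i _ => ?_
    have hd : |Δ.mulVec x i| ≤ D.mulVec (fun j => |x j|) i := by
      simp only [Matrix.mulVec, dotProduct]
      refine (Finset.abs_sum_le_sum_abs _ _).trans (Finset.sum_le_sum fun j _ => ?_)
      rw [abs_mul]
      exact mul_le_mul_of_nonneg_right (hΔ i j) (abs_nonneg _)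
    rw [Matrix.add_mulVec, Pi.add_apply, ← sq_abs]
    refine pow_le_pow_left₀ (abs_nonneg _) ?_ 2
    rw [add_sub_right_comm]
    exact (abs_add_le _ _).trans (by linarith)
end

section
/- For every x ∈ ℝⁿ and every δ ≥ 0, the maximum of ‖(A+Δ)x − b‖² over all matrices Δ ∈ ℝ^{m×n} with ‖Δ‖_∞ ≤ δ equals ‖Ax−b‖² + 2δ‖x‖₁‖Ax−b‖₁ + m δ² ‖x‖₁², where ‖Δ‖_∞ denotes the maximum absolute value of any entry of Δ. -/
/-- A sign function with values in `{1, -1}`. -/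
noncomputable def robustSgn (t : ℝ) : ℝ := if 0 ≤ t then 1 else -1

theorem robustSgn_abs (t : ℝ) : |robustSgn t| = 1 := by
  unfold robustSgn; split_ifs <;> simp

theorem robustSgn_sq (t : ℝ) : robustSgn t ^ 2 = 1 := by
  unfold robustSgn; split_ifs <;> simp

theorem robustSgn_mul (t : ℝ) : robustSgn t * t = |t| := by
  unfold robustSgn
  split_ifs with h
  · rw [abs_of_nonneg h, one_mul]
  · rw [abs_of_neg (not_le.mp h)]; ring

/-- For every `x ∈ ℝⁿ` and `δ ≥ 0`, the maximum of `‖(A+Δ)x − b‖²` over all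
matrices `Δ` with `‖Δ‖_∞ = max_{i,j} |Δ_{i,j}| ≤ δ` equals
`‖Ax−b‖² + 2δ‖x‖₁‖Ax−b‖₁ + m δ² ‖x‖₁²`. -/
theorem robust_inner_max_fixed
    (m n : ℕ) (hm : 0 < m) (hn : 0 < n)
    (A : Matrix (Fin m) (Fin n) ℝ) (b : Fin m → ℝ)
    (δ : ℝ) (hδ : 0 ≤ δ) (x : Fin n → ℝ) :
    IsGreatest
      {r : ℝ | ∃ Δ : Matrix (Fin m) (Fin n) ℝ,
        (⨆ i, ⨆ j, |Δ i j|) ≤ δ ∧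
        r = ∑ i, ((A + Δ).mulVec x i - b i) ^ 2}
      ((∑ i, (A.mulVec x i - b i) ^ 2)
        + 2 * δ * (∑ j, |x j|) * (∑ i, |A.mulVec x i - b i|)
        + (m : ℝ) * δ ^ 2 * (∑ j, |x j|) ^ 2) := by
  have key : ((∑ i, (A.mulVec x i - b i) ^ 2)
        + 2 * δ * (∑ j, |x j|) * (∑ i, |A.mulVec x i - b i|)
        + (m : ℝ) * δ ^ 2 * (∑ j, |x j|) ^ 2)
      = ∑ i, (|A.mulVec x i - b i| + δ * ∑ j, |x j|) ^ 2 := by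
    have h : ∀ i, (|A.mulVec x i - b i| + δ * ∑ j, |x j|) ^ 2
        = (A.mulVec x i - b i) ^ 2 + 2 * δ * (∑ j, |x j|) * |A.mulVec x i - b i|
          + δ ^ 2 * (∑ j, |x j|) ^ 2 := by
      intro i
      rw [← sq_abs (A.mulVec x i - b i)]
      ring
    simp only [h, Finset.sum_add_distrib, ← Finset.mul_sum, Finset.sum_const,
      Finset.card_univ, Fintype.card_fin, nsmul_eq_mul]
    ring
  rw [key]
  haveI : Nonempty (Fin m) := ⟨⟨0, hm⟩⟩
  haveI : Nonempty (Fin n) := ⟨⟨0, hn⟩⟩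
  constructor
  · refine ⟨Matrix.of fun i j => δ * robustSgn (A.mulVec x i - b i) * robustSgn (x j), ?_, ?_⟩
    · refine ciSup_le fun i => ciSup_le fun j => ?_
      simp only [Matrix.of_apply, abs_mul, robustSgn_abs, abs_of_nonneg hδ, mul_one]
      exact le_refl δ
    · refine Finset.sum_congr rfl fun i _ => ?_
      have h : (Matrix.of fun i j =>
          δ * robustSgn (A.mulVec x i - b i) * robustSgn (x j)).mulVec x i
          = robustSgn (A.mulVec x i - b i) * (δ * ∑ j, |x j|) := by
        simp only [Matrix.mulVec, dotProduct, Matrix.of_apply, Finset.mul_sum]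
        refine Finset.sum_congr rfl fun j _ => ?_
        rw [← robustSgn_mul (x j)]
        ring
      rw [Matrix.add_mulVec, Pi.add_apply, h, ← robustSgn_mul (A.mulVec x i - b i)]
      have h2 := robustSgn_sq (A.mulVec x i - b i)
      generalize hs : robustSgn (A.mulVec x i - b i) = s at *
      generalize A.mulVec x i = a at *
      generalize (δ * ∑ j, |x j|) = t
      linear_combination ((a - b i) ^ 2 - t ^ 2) * h2
  · rintro r ⟨Δ, hΔ, rfl⟩
    have hent : ∀ i j, |Δ i j| ≤ δ := fun i j =>
      ((le_ciSup (f := fun j => |Δ i j|) (Set.finite_range _).bddAbove j).trans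
        (le_ciSup (f := fun i => ⨆ j, |Δ i j|) (Set.finite_range _).bddAbove i)).trans hΔ
    refine Finset.sum_le_sum fun i _ => ?_
    rw [← sq_abs ((A + Δ).mulVec x i - b i)]
    refine pow_le_pow_left₀ (abs_nonneg _) ?_ 2
    have h : |Δ.mulVec x i| ≤ δ * ∑ j, |x j| := by
      simp only [Matrix.mulVec, dotProduct, Finset.mul_sum]
      refine (Finset.abs_sum_le_sum_abs _ _).trans (Finset.sum_le_sum fun j _ => ?_)
      rw [abs_mul]
      exact mul_le_mul_of_nonneg_right (hent i j) (abs_nonneg _)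
    rw [Matrix.add_mulVec, Pi.add_apply, add_sub_right_comm]
    exact (abs_add_le _ _).trans (by linarith)
end

section
/- The function f : ℝⁿ → ℝ defined by f(x) = ‖Ax−b‖² + 2⟨|Ax−b|, D|x|⟩ + ‖D|x|‖² is convex. -/
/-- The function `f(x) = ‖Ax−b‖² + 2⟨|Ax−b|, D|x|⟩ + ‖D|x|‖²` is convex. -/
theorem robust_objective_convex
    (m n : ℕ) (hm : 0 < m) (hn : 0 < n)
    (A D : Matrix (Fin m) (Fin n) ℝ) (b : Fin m → ℝ)
    (hD : ∀ i j, 0 ≤ D i j) :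
    ConvexOn ℝ Set.univ
      (fun x : Fin n → ℝ =>
        (∑ i, (A.mulVec x i - b i) ^ 2)
        + 2 * (∑ i, |A.mulVec x i - b i| * D.mulVec (fun j => |x j|) i)
        + ∑ i, (D.mulVec (fun j => |x j|) i) ^ 2) := by
  have hnn : ∀ i (x : Fin n → ℝ), 0 ≤ D.mulVec (fun j => |x j|) i := by
    intro i x
    simp only [Matrix.mulVec, dotProduct]
    exact Finset.sum_nonneg fun j _ => mul_nonneg (hD i j) (abs_nonneg _)
  have key : (fun x : Fin n → ℝ =>
        (∑ i, (A.mulVec x i - b i) ^ 2)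
        + 2 * (∑ i, |A.mulVec x i - b i| * D.mulVec (fun j => |x j|) i)
        + ∑ i, (D.mulVec (fun j => |x j|) i) ^ 2)
      = fun x => ∑ i, (|A.mulVec x i - b i| + D.mulVec (fun j => |x j|) i) ^ 2 := by
    funext x
    rw [Finset.mul_sum, ← Finset.sum_add_distrib, ← Finset.sum_add_distrib]
    refine Finset.sum_congr rfl fun i _ => ?_
    rw [← sq_abs (A.mulVec x i - b i)]
    ring
  rw [key]
  refine ⟨convex_univ, ?_⟩
  intro x _ y _ s t hs ht hst
  simp only [smul_eq_mul]
  rw [Finset.mul_sum, Finset.mul_sum, ← Finset.sum_add_distrib]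
  refine Finset.sum_le_sum fun i _ => ?_
  have h1 : |A.mulVec (s • x + t • y) i - b i|
      ≤ s * |A.mulVec x i - b i| + t * |A.mulVec y i - b i| := by
    have e : A.mulVec (s • x + t • y) i - b i
        = s * (A.mulVec x i - b i) + t * (A.mulVec y i - b i) := by
      simp only [Matrix.mulVec_add, Matrix.mulVec_smul, Pi.add_apply, Pi.smul_apply, smul_eq_mul]
      linear_combination (b i) * hst
    rw [e]
    refine (abs_add_le _ _).trans ?_
    rw [abs_mul, abs_mul, abs_of_nonneg hs, abs_of_nonneg ht]
  have h2 : D.mulVec (fun j => |(s • x + t • y) j|) i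
      ≤ s * D.mulVec (fun j => |x j|) i + t * D.mulVec (fun j => |y j|) i := by
    simp only [Matrix.mulVec, dotProduct]
    rw [Finset.mul_sum, Finset.mul_sum, ← Finset.sum_add_distrib]
    refine Finset.sum_le_sum fun j _ => ?_
    have h : |(s • x + t • y) j| ≤ s * |x j| + t * |y j| := by
      simp only [Pi.add_apply, Pi.smul_apply, smul_eq_mul]
      refine (abs_add_le _ _).trans ?_
      rw [abs_mul, abs_mul, abs_of_nonneg hs, abs_of_nonneg ht]
    calc _ ≤ D i j * (s * |x j| + t * |y j|) := mul_le_mul_of_nonneg_left h (hD i j)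
      _ = _ := by ring
  have h0 := add_nonneg (abs_nonneg (A.mulVec (s • x + t • y) i - b i)) (hnn i (s • x + t • y))
  set u := |A.mulVec x i - b i| + D.mulVec (fun j => |x j|) i with hu
  set v := |A.mulVec y i - b i| + D.mulVec (fun j => |y j|) i with hv
  have h3 : |A.mulVec (s • x + t • y) i - b i| + D.mulVec (fun j => |(s • x + t • y) j|) i
      ≤ s * u + t * v := by
    rw [hu, hv]; linarith
  refine (pow_le_pow_left₀ h0 h3 2).trans ?_
  have h4 : t = 1 - s := by linarith
  subst h4
  nlinarith [mul_nonneg (mul_nonneg hs ht) (sq_nonneg (u - v))]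
end

section
/- For every λ > 0, the function F : ℝⁿ → ℝ defined by F(x) = ‖Ax−b‖² + 2δ‖x‖₁‖Ax−b‖₁ + m δ² ‖x‖₁² + λ²‖x‖² is strongly convex with parameter 2λ² (i.e., x ↦ F(x) − λ²‖x‖² ... equivalently F(tx + (1−t)y) ≤ tF(x) + (1−t)F(y) − λ² t(1−t)‖x−y‖² for all x, y ∈ ℝⁿ and t ∈ [0,1]). -/
theorem sq_convex_aux (t a b c : ℝ) (h0 : 0 ≤ t) (h1 : t ≤ 1) (hc : 0 ≤ c)
    (h : c ≤ t * a + (1 - t) * b) : c ^ 2 ≤ t * a ^ 2 + (1 - t) * b ^ 2 := by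
  have h2 : c ^ 2 ≤ (t * a + (1 - t) * b) ^ 2 := pow_le_pow_left₀ hc h 2
  nlinarith [mul_nonneg (mul_nonneg h0 (sub_nonneg.2 h1)) (sq_nonneg (a - b))]

theorem abs_convex_aux (t a b : ℝ) (h0 : 0 ≤ t) (h1 : t ≤ 1) :
    |t * a + (1 - t) * b| ≤ t * |a| + (1 - t) * |b| := by
  calc _ ≤ |t * a| + |(1 - t) * b| := abs_add_le _ _
    _ = _ := by rw [abs_mul, abs_mul, abs_of_nonneg h0, abs_of_nonneg (sub_nonneg.2 h1)]

/-- For `λ > 0`, the function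
`F(x) = ‖Ax−b‖² + 2δ‖x‖₁‖Ax−b‖₁ + mδ²‖x‖₁² + λ²‖x‖²` is strongly convex with
parameter `2λ²`:
`F(tx + (1−t)y) ≤ tF(x) + (1−t)F(y) − λ² t(1−t)‖x−y‖²` for `t ∈ [0,1]`. -/
theorem regularized_robust_strongly_convex
    (m n : ℕ) (hm : 0 < m) (hn : 0 < n)
    (A : Matrix (Fin m) (Fin n) ℝ) (b : Fin m → ℝ)
    (δ : ℝ) (hδ : 0 ≤ δ) (lam : ℝ) (hlam : 0 < lam)
    (F : (Fin n → ℝ) → ℝ)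
    (hF : ∀ z : Fin n → ℝ, F z =
      (∑ i, (A.mulVec z i - b i) ^ 2)
      + 2 * δ * (∑ j, |z j|) * (∑ i, |A.mulVec z i - b i|)
      + (m : ℝ) * δ ^ 2 * (∑ j, |z j|) ^ 2
      + lam ^ 2 * ∑ j, (z j) ^ 2) :
    ∀ x y : Fin n → ℝ, ∀ t : ℝ, t ∈ Set.Icc (0 : ℝ) 1 →
      F (t • x + (1 - t) • y)
        ≤ t * F x + (1 - t) * F y
          - lam ^ 2 * t * (1 - t) * ∑ j, (x j - y j) ^ 2 := by
  rintro x y t ⟨h0, h1⟩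
  have key : ∀ z, F z = (∑ i, (|A.mulVec z i - b i| + δ * ∑ j, |z j|) ^ 2)
      + lam ^ 2 * ∑ j, (z j) ^ 2 := by
    intro z
    rw [hF]
    simp only [add_sq, Finset.sum_add_distrib, sq_abs, Finset.sum_const, Finset.card_univ,
      Fintype.card_fin, nsmul_eq_mul, ← Finset.sum_mul, ← Finset.mul_sum]
    ring
  have hs : ∑ j, |(t • x + (1 - t) • y) j| ≤ t * (∑ j, |x j|) + (1 - t) * ∑ j, |y j| := by
    rw [Finset.mul_sum, Finset.mul_sum, ← Finset.sum_add_distrib]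
    exact Finset.sum_le_sum fun j _ => abs_convex_aux t (x j) (y j) h0 h1
  have hq : ∑ j, ((t • x + (1 - t) • y) j) ^ 2
      = t * (∑ j, (x j) ^ 2) + (1 - t) * (∑ j, (y j) ^ 2)
        - t * (1 - t) * ∑ j, (x j - y j) ^ 2 := by
    simp only [Finset.mul_sum, ← Finset.sum_add_distrib, ← Finset.sum_sub_distrib]
    refine Finset.sum_congr rfl fun j _ => ?_
    simp only [Pi.add_apply, Pi.smul_apply, smul_eq_mul]
    ring
  have hr : ∑ i, (|A.mulVec (t • x + (1 - t) • y) i - b i|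
        + δ * ∑ j, |(t • x + (1 - t) • y) j|) ^ 2
      ≤ t * (∑ i, (|A.mulVec x i - b i| + δ * ∑ j, |x j|) ^ 2)
        + (1 - t) * ∑ i, (|A.mulVec y i - b i| + δ * ∑ j, |y j|) ^ 2 := by
    rw [Finset.mul_sum (a := t), Finset.mul_sum (a := 1 - t), ← Finset.sum_add_distrib]
    refine Finset.sum_le_sum fun i _ => sq_convex_aux _ _ _ _ h0 h1 (by positivity) ?_
    have e : A.mulVec (t • x + (1 - t) • y) i - b i
        = t * (A.mulVec x i - b i) + (1 - t) * (A.mulVec y i - b i) := by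
      simp only [Matrix.mulVec_add, Matrix.mulVec_smul, Pi.add_apply, Pi.smul_apply, smul_eq_mul]
      ring
    rw [e]
    have := abs_convex_aux t (A.mulVec x i - b i) (A.mulVec y i - b i) h0 h1
    have := mul_le_mul_of_nonneg_left hs hδ
    linarith
  rw [key, key x, key y, hq]
  linarith
end
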